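/- Let v : ℝ³ → ℝ³ be smooth, divergence-free on ℝ³ (div v = 0), and vanishing identically on the boundary plane {x ∈ ℝ³ : x₃ = 0}. Then at every point of the form (0, 0, θ̄), the θ̄-frame component of curl curl v satisfies: ∂_z[ (curl curl v)(T(z,r̄,θ̄))·(φ'(θ̄),0) ] evaluated at (0,0,θ̄) equals κ'(θ̄)·∂_z v_r̄ + 2κ(θ̄)·∂_z∂_θ̄ v_r̄ − ∂_z∂_θ̄² v_θ̄ − ∂_z³ v_θ̄ − ∂_z∂_r̄² v_θ̄ + κ(θ̄)·∂_z∂_r̄ v_θ̄ + κ(θ̄)²·∂_z v_θ̄, with all frame components evaluated at (0,0,θ̄). (Since div v = 0, curl curl v = −Δv, so this computes the derivative of the θ̄-component of the vector Laplacian of v along the curve on the boundary.) -/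

import Mathlib

/-- Partial derivative in the `j`-th coordinate direction on Euclidean `ℝ³`. -/
noncomputable def pdE {F : Type*} [NormedAddCommGroup F] [NormedSpace ℝ F]
    (j : Fin 3) (g : EuclideanSpace ℝ (Fin 3) → F) (x : EuclideanSpace ℝ (Fin 3)) : F :=
  fderiv ℝ g x (EuclideanSpace.single j 1)

/-- Euclidean divergence `div v = ∂₁v₁ + ∂₂v₂ + ∂₃v₃`. -/
noncomputable def div3 (v : EuclideanSpace ℝ (Fin 3) → EuclideanSpace ℝ (Fin 3))
    (x : EuclideanSpace ℝ (Fin 3)) : ℝ :=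
  ∑ i : Fin 3, pdE i (fun y => v y i) x

/-- Curvature `κ(θ̄) = |φ''(θ̄)|` of a unit-speed plane curve. -/
noncomputable def curveKappa (φ : ℝ → EuclideanSpace ℝ (Fin 2)) (θ : ℝ) : ℝ :=
  ‖deriv (deriv φ) θ‖

/-- Unit normal `N(θ̄) = φ''(θ̄)/|φ''(θ̄)|` of a unit-speed plane curve. -/
noncomputable def curveN (φ : ℝ → EuclideanSpace ℝ (Fin 2)) (θ : ℝ) :
    EuclideanSpace ℝ (Fin 2) :=
  ‖deriv (deriv φ) θ‖⁻¹ • deriv (deriv φ) θ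

/-- The factor `f(r̄,θ̄) = 1 − r̄·κ(θ̄)`. -/
noncomputable def fFactor (φ : ℝ → EuclideanSpace ℝ (Fin 2)) (r θ : ℝ) : ℝ :=
  1 - r * curveKappa φ θ

/-- Embedding `ℝ² ∋ v ↦ (v, 0) ∈ ℝ³`. -/
noncomputable def emb23 (v : EuclideanSpace ℝ (Fin 2)) : EuclideanSpace ℝ (Fin 3) :=
  !₂[v 0, v 1, 0]

/-- The coordinate map `T(z,r̄,θ̄) = (φ(θ̄) + r̄·N(θ̄), z)`. -/
noncomputable def Tmap (φ : ℝ → EuclideanSpace ℝ (Fin 2)) (z r θ : ℝ) :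
    EuclideanSpace ℝ (Fin 3) :=
  !₂[(φ θ + r • curveN φ θ) 0, (φ θ + r • curveN φ θ) 1, z]

/-- Frame component `v_z(z,r̄,θ̄) = v(T(z,r̄,θ̄))·(0,0,1)`. -/
noncomputable def vzComp (φ : ℝ → EuclideanSpace ℝ (Fin 2))
    (v : EuclideanSpace ℝ (Fin 3) → EuclideanSpace ℝ (Fin 3)) (z r θ : ℝ) : ℝ :=
  inner ℝ (v (Tmap φ z r θ)) (EuclideanSpace.single 2 (1:ℝ))

/-- Frame component `v_r̄(z,r̄,θ̄) = v(T(z,r̄,θ̄))·(N(θ̄),0)`. -/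
noncomputable def vrComp (φ : ℝ → EuclideanSpace ℝ (Fin 2))
    (v : EuclideanSpace ℝ (Fin 3) → EuclideanSpace ℝ (Fin 3)) (z r θ : ℝ) : ℝ :=
  inner ℝ (v (Tmap φ z r θ)) (emb23 (curveN φ θ))

/-- Frame component `v_θ̄(z,r̄,θ̄) = v(T(z,r̄,θ̄))·(φ'(θ̄),0)`. -/
noncomputable def vθComp (φ : ℝ → EuclideanSpace ℝ (Fin 2))
    (v : EuclideanSpace ℝ (Fin 3) → EuclideanSpace ℝ (Fin 3)) (z r θ : ℝ) : ℝ :=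
  inner ℝ (v (Tmap φ z r θ)) (emb23 (deriv φ θ))

/-- `∂_z` for a function of `(z, r̄, θ̄)`. -/
noncomputable def Dz (g : ℝ → ℝ → ℝ → ℝ) (z r θ : ℝ) : ℝ := deriv (fun s => g s r θ) z

/-- `∂_r̄` for a function of `(z, r̄, θ̄)`. -/
noncomputable def Dr (g : ℝ → ℝ → ℝ → ℝ) (z r θ : ℝ) : ℝ := deriv (fun s => g z s θ) r

/-- `∂_θ̄` for a function of `(z, r̄, θ̄)`. -/
noncomputable def Dθ (g : ℝ → ℝ → ℝ → ℝ) (z r θ : ℝ) : ℝ := deriv (fun s => g z r s) θ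

/-- Euclidean curl of a vector field on `ℝ³`. -/
noncomputable def curl3 (w : EuclideanSpace ℝ (Fin 3) → EuclideanSpace ℝ (Fin 3))
    (x : EuclideanSpace ℝ (Fin 3)) : EuclideanSpace ℝ (Fin 3) :=
  !₂[pdE 1 (fun y => w y 2) x - pdE 2 (fun y => w y 1) x,
    pdE 2 (fun y => w y 0) x - pdE 0 (fun y => w y 2) x,
    pdE 0 (fun y => w y 1) x - pdE 1 (fun y => w y 0) x]

open scoped ContDiff

abbrev E2 := EuclideanSpace ℝ (Fin 2)
abbrev E3 := EuclideanSpace ℝ (Fin 3)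

/-- `emb23` as a continuous linear map. -/
noncomputable def embL : E2 →L[ℝ] E3 :=
  LinearMap.toContinuousLinearMap
    { toFun := emb23
      map_add' := by
        intro x y; ext i; fin_cases i <;> simp [emb23]
      map_smul' := by
        intro c x; ext i; fin_cases i <;> simp [emb23] }

lemma emb23_eq (x : E2) : emb23 x = embL x := rfl

noncomputable def eE (i : Fin 3) : E3 := EuclideanSpace.single i (1:ℝ)

lemma embL_eq (x : E2) : embL x = x 0 • eE 0 + x 1 • eE 1 := by
  rw [← emb23_eq]; ext i; fin_cases i <;> simp [emb23, eE]

lemma Tmap_eq (φ : ℝ → E2) (z r θ : ℝ) :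
    Tmap φ z r θ = embL (φ θ + r • curveN φ θ) + z • eE 2 := by
  rw [← emb23_eq]; ext i; fin_cases i <;> simp [Tmap, emb23, eE]

/-- Second derivative. -/
noncomputable def Hs (v : E3 → E3) (x a b : E3) : E3 := fderiv ℝ (fderiv ℝ v) x a b

lemma cd1 {v : E3 → E3} (hv : ContDiff ℝ (⊤ : ℕ∞) v) : ContDiff ℝ (⊤ : ℕ∞) (fderiv ℝ v) :=
  hv.fderiv_right (by norm_cast)

lemma hasF {v : E3 → E3} (hv : ContDiff ℝ (⊤ : ℕ∞) v) (x : E3) :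
    HasFDerivAt v (fderiv ℝ v x) x :=
  (hv.differentiable (by simp) x).hasFDerivAt

lemma pdE_one {v : E3 → E3} (hv : ContDiff ℝ (⊤ : ℕ∞) v) (i k : Fin 3) (x : E3) :
    pdE i (fun y => v y k) x = (fderiv ℝ v x (eE i)) k := by
  have h := (EuclideanSpace.proj (𝕜 := ℝ) k : E3 →L[ℝ] ℝ).hasFDerivAt.comp x (hasF hv x)
  have h2 : fderiv ℝ (fun y => v y k) x = _ := h.fderiv
  simp [pdE, h2, eE]

lemma hasF2 {v : E3 → E3} (hv : ContDiff ℝ (⊤ : ℕ∞) v) (i k : Fin 3) (x : E3) :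
    HasFDerivAt (fun y => (fderiv ℝ v y (eE i)) k)
     ((EuclideanSpace.proj (𝕜 := ℝ) k : E3 →L[ℝ] ℝ).comp
       ((ContinuousLinearMap.apply ℝ E3 (eE i)).comp (fderiv ℝ (fderiv ℝ v) x))) x := by
  have h1 : HasFDerivAt (fderiv ℝ v) (fderiv ℝ (fderiv ℝ v) x) x :=
    ((cd1 hv).differentiable (by simp) x).hasFDerivAt
  exact (EuclideanSpace.proj (𝕜 := ℝ) k : E3 →L[ℝ] ℝ).hasFDerivAt.comp x
    ((ContinuousLinearMap.apply ℝ E3 (eE i)).hasFDerivAt.comp x h1)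

lemma pdE_sub2 {v : E3 → E3} (hv : ContDiff ℝ (⊤ : ℕ∞) v) (j i k i' k' : Fin 3) (x : E3) :
    pdE j (fun y => (fderiv ℝ v y (eE i)) k - (fderiv ℝ v y (eE i')) k') x
      = Hs v x (eE j) (eE i) k - Hs v x (eE j) (eE i') k' := by
  have h2 : fderiv ℝ (fun y => (fderiv ℝ v y (eE i)) k - (fderiv ℝ v y (eE i')) k') x = _ :=
    ((hasF2 hv i k x).sub (hasF2 hv i' k' x)).fderiv
  rw [pdE, h2]; simp [Hs, eE]

lemma div_deriv {v : E3 → E3} (hv : ContDiff ℝ (⊤ : ℕ∞) v) (hdiv : ∀ x, div3 v x = 0)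
    (j : Fin 3) (x : E3) :
    Hs v x (eE j) (eE 0) 0 + Hs v x (eE j) (eE 1) 1 + Hs v x (eE j) (eE 2) 2 = 0 := by
  have h0 : (fun y => (fderiv ℝ v y (eE 0)) 0 + (fderiv ℝ v y (eE 1)) 1
      + (fderiv ℝ v y (eE 2)) 2) = fun _ => (0:ℝ) := by
    funext y
    have := hdiv y
    simpa [div3, Fin.sum_univ_three, pdE_one hv] using this
  have h2 := (((hasF2 hv 0 0 x).add (hasF2 hv 1 1 x)).add (hasF2 hv 2 2 x))
  have h3 : HasFDerivAt (fun y => (fderiv ℝ v y (eE 0)) 0 + (fderiv ℝ v y (eE 1)) 1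
      + (fderiv ℝ v y (eE 2)) 2) _ x := h2
  rw [h0] at h3
  have h4 := h3.unique (hasFDerivAt_const (0:ℝ) x)
  have h5 := congrArg (fun L : E3 →L[ℝ] ℝ => L (eE j)) h4
  simpa [Hs] using h5

lemma Hs_symm {v : E3 → E3} (hv : ContDiff ℝ (⊤ : ℕ∞) v) (x a b : E3) :
    Hs v x a b = Hs v x b a := by
  have h : IsSymmSndFDerivAt ℝ v x :=
    hv.contDiffAt.isSymmSndFDerivAt (by
      simp only [minSmoothness_of_isRCLikeNormedField]
      exact (WithTop.coe_le_coe.2 le_top : ((2:ℕ∞) : WithTop ℕ∞) ≤ ((⊤:ℕ∞) : WithTop ℕ∞)))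
  exact h a b

lemma curlcurl {v : E3 → E3} (hv : ContDiff ℝ (⊤ : ℕ∞) v) (hdiv : ∀ x, div3 v x = 0) (x : E3) :
    curl3 (curl3 v) x
      = -(Hs v x (eE 0) (eE 0) + Hs v x (eE 1) (eE 1) + Hs v x (eE 2) (eE 2)) := by
  have c0 : (fun y => curl3 v y 0)
      = fun y => (fderiv ℝ v y (eE 1)) 2 - (fderiv ℝ v y (eE 2)) 1 := by
    funext y; simp [curl3, pdE_one hv]
  have c1 : (fun y => curl3 v y 1)
      = fun y => (fderiv ℝ v y (eE 2)) 0 - (fderiv ℝ v y (eE 0)) 2 := by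
    funext y; simp [curl3, pdE_one hv]
  have c2 : (fun y => curl3 v y 2)
      = fun y => (fderiv ℝ v y (eE 0)) 1 - (fderiv ℝ v y (eE 1)) 0 := by
    funext y; simp [curl3, pdE_one hv]
  have d0 := div_deriv hv hdiv 0 x
  have d1 := div_deriv hv hdiv 1 x
  have d2 := div_deriv hv hdiv 2 x
  have s01 := Hs_symm hv x (eE 0) (eE 1)
  have s02 := Hs_symm hv x (eE 0) (eE 2)
  have s12 := Hs_symm hv x (eE 1) (eE 2)
  rw [s01, s02] at d0
  rw [s12] at d1
  rw [← s01] at d1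
  rw [← s02, ← s12] at d2
  unfold curl3 at *
  rw [c0, c1, c2]
  simp only [pdE_sub2 hv]
  ext i
  fin_cases i
  · simp; linarith
  · simp; linarith
  · simp; linarith

/-- Rotation invariance. -/
lemma trace_rot (v : E3 → E3) (x : E3) (t n : E2)
    (h1 : t 0 ^ 2 + n 0 ^ 2 = 1) (h2 : t 1 ^ 2 + n 1 ^ 2 = 1) (h3 : t 0 * t 1 + n 0 * n 1 = 0) :
    Hs v x (embL t) (embL t) + Hs v x (embL n) (embL n)
      = Hs v x (eE 0) (eE 0) + Hs v x (eE 1) (eE 1) := by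
  simp only [Hs, embL_eq, map_add, map_smul, add_apply, smul_apply]
  ext i
  simp only [PiLp.add_apply, PiLp.smul_apply, smul_eq_mul]
  set A := (fderiv ℝ (fderiv ℝ v) x (eE 0) (eE 0)) i
  set B := (fderiv ℝ (fderiv ℝ v) x (eE 0) (eE 1)) i
  set C := (fderiv ℝ (fderiv ℝ v) x (eE 1) (eE 0)) i
  set D := (fderiv ℝ (fderiv ℝ v) x (eE 1) (eE 1)) i
  linear_combination A * h1 + D * h2 + (B + C) * h3

lemma ortho_alg {a b c d : ℝ} (h1 : a ^ 2 + b ^ 2 = 1) (h2 : c ^ 2 + d ^ 2 = 1)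
    (h3 : a * c + b * d = 0) : a ^ 2 + c ^ 2 = 1 ∧ b ^ 2 + d ^ 2 = 1 ∧ a * b + c * d = 0 := by
  have e1 : a ^ 2 = d ^ 2 := by
    linear_combination a ^ 2 * (-h2) + d ^ 2 * h1 + (a * c - b * d) * h3
  refine ⟨by linarith, by linarith, ?_⟩
  linear_combination (-a * b) * h2 - c * d * h1 + (a * d + b * c) * h3

section curve
variable {δ : ℝ} {φ : ℝ → E2}

lemma curve_facts
    (hφ : ContDiffOn ℝ (⊤ : ℕ∞) φ (Set.Ioo (-δ) δ))
    (hunit : ∀ θ ∈ Set.Ioo (-δ) δ, ‖deriv φ θ‖ = 1)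
    (hcurv : ∀ θ ∈ Set.Ioo (-δ) δ, deriv (deriv φ) θ ≠ 0) (θ : ℝ) (hθ : θ ∈ Set.Ioo (-δ) δ) :
    HasDerivAt φ (deriv φ θ) θ ∧
    HasDerivAt (deriv φ) (curveKappa φ θ • curveN φ θ) θ ∧
    HasDerivAt (curveN φ) (-(curveKappa φ θ) • deriv φ θ) θ ∧
    HasDerivAt (curveKappa φ) (deriv (curveKappa φ) θ) θ ∧
    ((deriv φ θ) 0 ^ 2 + (curveN φ θ) 0 ^ 2 = 1 ∧ (deriv φ θ) 1 ^ 2 + (curveN φ θ) 1 ^ 2 = 1 ∧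
      (deriv φ θ) 0 * (deriv φ θ) 1 + (curveN φ θ) 0 * (curveN φ θ) 1 = 0) := by
  have hI : IsOpen (Set.Ioo (-δ) δ) := isOpen_Ioo
  have c1 : ContDiffOn ℝ (⊤ : ℕ∞) (deriv φ) (Set.Ioo (-δ) δ) :=
    hφ.deriv_of_isOpen hI (by norm_cast)
  have c2 : ContDiffOn ℝ (⊤ : ℕ∞) (deriv (deriv φ)) (Set.Ioo (-δ) δ) :=
    c1.deriv_of_isOpen hI (by norm_cast)
  have dd : ∀ {f : ℝ → E2}, ContDiffOn ℝ (⊤ : ℕ∞) f (Set.Ioo (-δ) δ) →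
      ∀ s ∈ Set.Ioo (-δ) δ, DifferentiableAt ℝ f s := fun h s hs =>
    (h.differentiableOn (by simp)).differentiableAt (hI.mem_nhds hs)
  have dκ : DifferentiableAt ℝ (curveKappa φ) θ := (dd c2 θ hθ).norm ℝ (hcurv θ hθ)
  have κ0 : ∀ s ∈ Set.Ioo (-δ) δ, curveKappa φ s ≠ 0 := fun s hs => by
    simpa [curveKappa] using hcurv s hs
  have dN : DifferentiableAt ℝ (curveN φ) θ := by
    have : DifferentiableAt ℝ (fun s => (curveKappa φ s)⁻¹ • deriv (deriv φ) s) θ :=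
      (dκ.inv (κ0 θ hθ)).smul (dd c2 θ hθ)
    exact this
  have kN : ∀ s ∈ Set.Ioo (-δ) δ, deriv (deriv φ) s = curveKappa φ s • curveN φ s := by
    intro s hs
    have := κ0 s hs
    have e : curveN φ s = (curveKappa φ s)⁻¹ • deriv (deriv φ) s := rfl
    rw [e, smul_smul, mul_inv_cancel₀ this, one_smul]
  have dt : ∀ s ∈ Set.Ioo (-δ) δ, HasDerivAt (deriv φ) (curveKappa φ s • curveN φ s) s := by
    intro s hs
    rw [← kN s hs]; exact (dd c1 s hs).hasDerivAt
  have tt : ∀ s ∈ Set.Ioo (-δ) δ, (inner ℝ (deriv φ s) (deriv φ s) : ℝ) = 1 := by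
    intro s hs; rw [real_inner_self_eq_norm_sq, hunit s hs]; norm_num
  have nn : ∀ s ∈ Set.Ioo (-δ) δ, (inner ℝ (curveN φ s) (curveN φ s) : ℝ) = 1 := by
    intro s hs
    have := κ0 s hs
    have e : ‖curveN φ s‖ = 1 := by
      unfold curveN
      rw [norm_smul, norm_inv, norm_norm]
      exact inv_mul_cancel₀ this
    rw [real_inner_self_eq_norm_sq, e]; norm_num
  have tn : ∀ s ∈ Set.Ioo (-δ) δ, (inner ℝ (deriv φ s) (curveN φ s) : ℝ) = 0 := by
    intro s hs
    have h := (dt s hs).inner ℝ (dt s hs)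
    have h' : HasDerivAt (fun u => (inner ℝ (deriv φ u) (deriv φ u) : ℝ)) 0 s := by
      refine (hasDerivAt_const s (1:ℝ)).congr_of_eventuallyEq ?_
      filter_upwards [hI.mem_nhds hs] with u hu using tt u hu
    have := h.unique h'
    rw [inner_smul_right, inner_smul_left, real_inner_comm (deriv φ s)] at this
    simp only [conj_trivial] at this
    have k := κ0 s hs
    have : curveKappa φ s * inner ℝ (deriv φ s) (curveN φ s) = 0 := by
      linarith
    exact (mul_eq_zero.1 this).resolve_left k
  have alg := ortho_alg (a := (deriv φ θ) 0) (b := (deriv φ θ) 1) (c := (curveN φ θ) 0)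
    (d := (curveN φ θ) 1)
    (by have := tt θ hθ; rw [PiLp.inner_apply, Fin.sum_univ_two] at this; simp at this; nlinarith)
    (by have := nn θ hθ; rw [PiLp.inner_apply, Fin.sum_univ_two] at this; simp at this; nlinarith)
    (by have := tn θ hθ; simp [PiLp.inner_apply, Fin.sum_univ_two] at this; nlinarith)
  have p1 : (inner ℝ (deriv φ θ) (deriv (curveN φ) θ) : ℝ) = - curveKappa φ θ := by
    have h := (dt θ hθ).inner ℝ dN.hasDerivAt
    have h' : HasDerivAt (fun u => (inner ℝ (deriv φ u) (curveN φ u) : ℝ)) 0 θ := by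
      refine (hasDerivAt_const θ (0:ℝ)).congr_of_eventuallyEq ?_
      filter_upwards [hI.mem_nhds hθ] with u hu using tn u hu
    have := h.unique h'
    rw [inner_smul_left, nn θ hθ] at this
    simp only [conj_trivial] at this
    linarith
  have p2 : (inner ℝ (curveN φ θ) (deriv (curveN φ) θ) : ℝ) = 0 := by
    have h := dN.hasDerivAt.inner ℝ dN.hasDerivAt
    have h' : HasDerivAt (fun u => (inner ℝ (curveN φ u) (curveN φ u) : ℝ)) 0 θ := by
      refine (hasDerivAt_const θ (1:ℝ)).congr_of_eventuallyEq ?_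
      filter_upwards [hI.mem_nhds hθ] with u hu using nn u hu
    have := h.unique h'
    rw [real_inner_comm (curveN φ θ) (deriv (curveN φ) θ)] at this
    linarith
  refine ⟨(dd hφ θ hθ).hasDerivAt, dt θ hθ, ?_, dκ.hasDerivAt, alg⟩
  have : deriv (curveN φ) θ = -(curveKappa φ θ) • deriv φ θ := by
    obtain ⟨a1, a2, a3⟩ := alg
    simp [PiLp.inner_apply, Fin.sum_univ_two] at p1 p2
    ext i
    fin_cases i
    · simp only [Fin.zero_eta, PiLp.smul_apply, smul_eq_mul]
      linear_combination (deriv φ θ) 0 * p1 + (curveN φ θ) 0 * p2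
        - (deriv (curveN φ) θ) 0 * a1 - (deriv (curveN φ) θ) 1 * a3
    · simp only [Fin.mk_one, PiLp.smul_apply, smul_eq_mul]
      linear_combination (deriv φ θ) 1 * p1 + (curveN φ θ) 1 * p2
        - (deriv (curveN φ) θ) 1 * a2 - (deriv (curveN φ) θ) 0 * a3
  rw [← this]; exact dN.hasDerivAt

end curve

/-- derivative of `v` along a curve -/
lemma along {v : E3 → E3} (hv : ContDiff ℝ (⊤ : ℕ∞) v) {γ : ℝ → E3} {γ' : E3} {s : ℝ}
    (h : HasDerivAt γ γ' s) : HasDerivAt (fun u => v (γ u)) (fderiv ℝ v (γ s) γ') s :=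
  (hasF hv (γ s)).comp_hasDerivAt s h

lemma along2 {v : E3 → E3} (hv : ContDiff ℝ (⊤ : ℕ∞) v) {γ c : ℝ → E3} {γ' c' : E3} {s : ℝ}
    (h : HasDerivAt γ γ' s) (hc : HasDerivAt c c' s) :
    HasDerivAt (fun u => fderiv ℝ v (γ u) (c u)) (Hs v (γ s) γ' (c s) + fderiv ℝ v (γ s) c') s := by
  have h1 : HasFDerivAt (fderiv ℝ v) (fderiv ℝ (fderiv ℝ v) (γ s)) (γ s) :=
    ((cd1 hv).differentiable (by simp) _).hasFDerivAt
  exact (h1.comp_hasDerivAt s h).clm_apply hc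

/-- For a smooth divergence-free vector field `v` vanishing on the
boundary plane `{x₃ = 0}`, at every point `(0,0,θ̄)` the `θ̄`-frame component of
`curl curl v` (`= −Δv`) satisfies
`∂_z[(curl curl v)(T)·(φ',0)] = κ'·∂_z v_r̄ + 2κ·∂_z∂_θ̄ v_r̄ − ∂_z∂_θ̄² v_θ̄ − ∂_z³ v_θ̄
  − ∂_z∂_r̄² v_θ̄ + κ·∂_z∂_r̄ v_θ̄ + κ²·∂_z v_θ̄`. -/
theorem stmt10 (δ : ℝ) (hδ : 0 < δ) (φ : ℝ → EuclideanSpace ℝ (Fin 2))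
    (hφ : ContDiffOn ℝ (⊤ : ℕ∞) φ (Set.Ioo (-δ) δ))
    (hunit : ∀ θ ∈ Set.Ioo (-δ) δ, ‖deriv φ θ‖ = 1)
    (hcurv : ∀ θ ∈ Set.Ioo (-δ) δ, deriv (deriv φ) θ ≠ 0)
    (v : EuclideanSpace ℝ (Fin 3) → EuclideanSpace ℝ (Fin 3))
    (hv : ContDiff ℝ (⊤ : ℕ∞) v)
    (hdiv : ∀ x : EuclideanSpace ℝ (Fin 3), div3 v x = 0)
    (hbd : ∀ x : EuclideanSpace ℝ (Fin 3), x 2 = 0 → v x = 0) :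
    ∀ θ ∈ Set.Ioo (-δ) δ,
      Dz (fun z' r' θ' =>
          (inner ℝ (curl3 (curl3 v) (Tmap φ z' r' θ')) (emb23 (deriv φ θ')) : ℝ)) 0 0 θ
        = deriv (curveKappa φ) θ * Dz (vrComp φ v) 0 0 θ
          + 2 * curveKappa φ θ * Dz (Dθ (vrComp φ v)) 0 0 θ
          - Dz (Dθ (Dθ (vθComp φ v))) 0 0 θ
          - Dz (Dz (Dz (vθComp φ v))) 0 0 θ
          - Dz (Dr (Dr (vθComp φ v))) 0 0 θ
          + curveKappa φ θ * Dz (Dr (vθComp φ v)) 0 0 θ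
          + curveKappa φ θ ^ 2 * Dz (vθComp φ v) 0 0 θ := by
  intro θ hθ
  have F := curve_facts hφ hunit hcurv
  have hI : IsOpen (Set.Ioo (-δ) δ) := isOpen_Ioo
  have jd : ∀ {g : ℝ → E2} {g' : E2} {s : ℝ}, HasDerivAt g g' s →
      HasDerivAt (fun u => embL (g u)) (embL g') s := fun h =>
    embL.hasFDerivAt.comp_hasDerivAt _ h
  -- the curve at height z
  have T0 : ∀ z s, Tmap φ z 0 s = embL (φ s) + z • eE 2 := by
    intro z s; rw [Tmap_eq]; simp
  have dγ : ∀ z, ∀ s ∈ Set.Ioo (-δ) δ,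
      HasDerivAt (fun u => Tmap φ z 0 u) (embL (deriv φ s)) s := by
    intro z s hs
    simp only [T0]
    exact (jd (F s hs).1).add_const _
  have dr : ∀ z r, HasDerivAt (fun u => Tmap φ z u θ) (embL (curveN φ θ)) r := by
    intro z r
    simp only [Tmap_eq]
    have : HasDerivAt (fun u : ℝ => φ θ + u • curveN φ θ) (curveN φ θ) r := by
      simpa using ((hasDerivAt_id r).smul_const (curveN φ θ)).const_add (φ θ)
    exact (jd this).add_const _
  have dz : ∀ z r, HasDerivAt (fun u => Tmap φ u r θ) (eE 2) z := by
    intro z r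
    simp only [Tmap_eq]
    simpa using ((hasDerivAt_id z).smul_const (eE 2)).const_add (embL (φ θ + r • curveN φ θ))
  set κ := curveKappa φ with hκ
  set N := curveN φ with hN
  set t := deriv φ with ht
  -- θ derivative of v_r
  have A1 : ∀ z, Dθ (vrComp φ v) z 0 θ = inner ℝ (fderiv ℝ v (Tmap φ z 0 θ) (embL (t θ))) (embL (N θ))
      - κ θ * inner ℝ (v (Tmap φ z 0 θ)) (embL (t θ)) := by
    intro z
    have h := (along hv (dγ z θ hθ)).inner ℝ (jd (F θ hθ).2.2.1)
    have h2 : Dθ (vrComp φ v) z 0 θ = _ := h.deriv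
    rw [h2, map_smul, inner_smul_right]; ring
  have A2 : ∀ z, ∀ s ∈ Set.Ioo (-δ) δ, Dθ (vθComp φ v) z 0 s
      = inner ℝ (v (Tmap φ z 0 s)) (embL (κ s • N s))
        + inner ℝ (fderiv ℝ v (Tmap φ z 0 s) (embL (t s))) (embL (t s)) := by
    intro z s hs
    have h := (along hv (dγ z s hs)).inner ℝ (jd (F s hs).2.1)
    exact h.deriv
  have A3 : ∀ z, Dθ (Dθ (vθComp φ v)) z 0 θ
      = deriv κ θ * inner ℝ (v (Tmap φ z 0 θ)) (embL (N θ))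
        - κ θ ^ 2 * inner ℝ (v (Tmap φ z 0 θ)) (embL (t θ))
        + 2 * κ θ * inner ℝ (fderiv ℝ v (Tmap φ z 0 θ) (embL (t θ))) (embL (N θ))
        + inner ℝ (Hs v (Tmap φ z 0 θ) (embL (t θ)) (embL (t θ))) (embL (t θ))
        + κ θ * inner ℝ (fderiv ℝ v (Tmap φ z 0 θ) (embL (N θ))) (embL (t θ)) := by
    intro z
    obtain ⟨f1, f2, f3, f4, -⟩ := F θ hθ
    have h := ((along hv (dγ z θ hθ)).inner ℝ (jd (f4.smul f3))).add
      ((along2 hv (dγ z θ hθ) (jd f2)).inner ℝ (jd f2))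
    have h2 : HasDerivAt (fun s => Dθ (vθComp φ v) z 0 s) _ θ := h.congr_of_eventuallyEq (by
      filter_upwards [hI.mem_nhds hθ] with s hs using A2 z s hs)
    have h3 : Dθ (Dθ (vθComp φ v)) z 0 θ = _ := h2.deriv
    rw [h3]
    simp only [Pi.smul_apply', map_add, map_smul, inner_add_right, inner_add_left,
      inner_smul_right, inner_smul_left, conj_trivial]
    ring
  have A4 : ∀ z r, Dr (vθComp φ v) z r θ
      = inner ℝ (fderiv ℝ v (Tmap φ z r θ) (embL (N θ))) (embL (t θ)) := by
    intro z r
    have h := (along hv (dr z r)).inner ℝ (hasDerivAt_const r (embL (t θ)))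
    have h2 : Dr (vθComp φ v) z r θ = _ := h.deriv
    rw [h2]; simp
  have A5 : ∀ z r, Dr (Dr (vθComp φ v)) z r θ
      = inner ℝ (Hs v (Tmap φ z r θ) (embL (N θ)) (embL (N θ))) (embL (t θ)) := by
    intro z r
    have h := (along2 hv (dr z r) (hasDerivAt_const r (embL (N θ)))).inner ℝ
      (hasDerivAt_const r (embL (t θ)))
    have h2 : Dr (Dr (vθComp φ v)) z r θ = _ :=
      (h.congr_of_eventuallyEq (Filter.Eventually.of_forall fun s => A4 z s)).deriv
    rw [h2]; simp
  have A6 : ∀ z, Dz (vθComp φ v) z 0 θ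
      = inner ℝ (fderiv ℝ v (Tmap φ z 0 θ) (eE 2)) (embL (t θ)) := by
    intro z
    have h := (along hv (dz z 0)).inner ℝ (hasDerivAt_const z (embL (t θ)))
    have h2 : Dz (vθComp φ v) z 0 θ = _ := h.deriv
    rw [h2]; simp
  have A7 : ∀ z, Dz (Dz (vθComp φ v)) z 0 θ
      = inner ℝ (Hs v (Tmap φ z 0 θ) (eE 2) (eE 2)) (embL (t θ)) := by
    intro z
    have h := (along2 hv (dz z 0) (hasDerivAt_const z (eE 2))).inner ℝ
      (hasDerivAt_const z (embL (t θ)))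
    have h2 : Dz (Dz (vθComp φ v)) z 0 θ = _ :=
      (h.congr_of_eventuallyEq (Filter.Eventually.of_forall fun s => A6 s)).deriv
    rw [h2]; simp
  -- differentiability in z
  have dT : Differentiable ℝ (fun z => Tmap φ z 0 θ) := fun z => (dz z 0).differentiableAt
  have B0 : ∀ c : E3, Differentiable ℝ fun z => (inner ℝ (v (Tmap φ z 0 θ)) c : ℝ) := fun c =>
    ((hv.differentiable (by simp)).comp dT).inner ℝ (differentiable_const c)
  have B1 : ∀ a c : E3, Differentiable ℝ
      fun z => (inner ℝ (fderiv ℝ v (Tmap φ z 0 θ) a) c : ℝ) := fun a c =>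
    ((((cd1 hv).differentiable (by simp)).comp dT).clm_apply
      (differentiable_const a)).inner ℝ (differentiable_const c)
  have cd2 : ContDiff ℝ (⊤ : ℕ∞) (fderiv ℝ (fderiv ℝ v)) := (cd1 hv).fderiv_right (by norm_cast)
  have B2 : ∀ a b c : E3, Differentiable ℝ
      fun z => (inner ℝ (Hs v (Tmap φ z 0 θ) a b) c : ℝ) := fun a b c =>
    ((((cd2.differentiable (by simp)).comp dT).clm_apply
      (differentiable_const a)).clm_apply (differentiable_const b)).inner ℝ (differentiable_const c)
  have C1 : DifferentiableAt ℝ (fun z => vrComp φ v z 0 θ) 0 := B0 _ _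
  have C2 : DifferentiableAt ℝ (fun z => Dθ (vrComp φ v) z 0 θ) 0 := by
    simp only [A1]; exact ((B1 _ _).sub ((B0 _).const_mul _)) _
  have C3 : DifferentiableAt ℝ (fun z => Dθ (Dθ (vθComp φ v)) z 0 θ) 0 := by
    simp only [A3]
    exact ((((((B0 _).const_mul _).sub ((B0 _).const_mul _)).add ((B1 _ _).const_mul _)).add
      (B2 _ _ _)).add ((B1 _ _).const_mul _)) _
  have C4 : DifferentiableAt ℝ (fun z => Dz (Dz (vθComp φ v)) z 0 θ) 0 := by
    simp only [A7]; exact B2 _ _ _ _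
  have C5 : DifferentiableAt ℝ (fun z => Dr (Dr (vθComp φ v)) z 0 θ) 0 := by
    simp only [A5]; exact B2 _ _ _ _
  have C6 : DifferentiableAt ℝ (fun z => Dr (vθComp φ v) z 0 θ) 0 := by
    simp only [A4]; exact B1 _ _ _
  have C7 : DifferentiableAt ℝ (fun z => vθComp φ v z 0 θ) 0 := B0 _ _
  have key : ∀ z, (inner ℝ (curl3 (curl3 v) (Tmap φ z 0 θ)) (emb23 (t θ)) : ℝ)
      = deriv κ θ * vrComp φ v z 0 θ
          + 2 * κ θ * Dθ (vrComp φ v) z 0 θ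
          - Dθ (Dθ (vθComp φ v)) z 0 θ
          - Dz (Dz (vθComp φ v)) z 0 θ
          - Dr (Dr (vθComp φ v)) z 0 θ
          + κ θ * Dr (vθComp φ v) z 0 θ
          + κ θ ^ 2 * vθComp φ v z 0 θ := by
    intro z
    obtain ⟨a1, a2, a3⟩ := (F θ hθ).2.2.2.2
    rw [A1, A3, A7, A5, A4, curlcurl hv hdiv, ← trace_rot v _ _ _ a1 a2 a3]
    have e1 : vrComp φ v z 0 θ = inner ℝ (v (Tmap φ z 0 θ)) (embL (N θ)) := rfl
    have e2 : vθComp φ v z 0 θ = inner ℝ (v (Tmap φ z 0 θ)) (embL (t θ)) := rfl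
    rw [e1, e2, emb23_eq, inner_neg_left, inner_add_left, inner_add_left]
    ring
  have fin := (((((((C1.hasDerivAt.const_mul (deriv κ θ)).add
    (C2.hasDerivAt.const_mul (2 * κ θ))).sub C3.hasDerivAt).sub C4.hasDerivAt).sub
    C5.hasDerivAt).add (C6.hasDerivAt.const_mul (κ θ))).add
    (C7.hasDerivAt.const_mul (κ θ ^ 2)))
  exact (fin.congr_of_eventuallyEq (Filter.Eventually.of_forall key)).deriv
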